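/- arXiv:1104.3207 — 3 statements merged into one kernel-verified Lean document; each statement's English description precedes it below -/
import Mathlib

section
/- Profile of the fixed-distance graph, negative bound: let 0 < ε < 1/2 and 0 < τ, κ < 1 be real numbers with κ < (1 − τ)/(1 − ε). For each n let E_n ⊆ (Fin n → Bool) × (Fin n → Bool) be the set of pairs (x, y) whose Hamming distance is exactly ⌊εn⌋. Then there exists N such that for every n ≥ N, the triple (⌊τn⌋, ⌊τn⌋, ⌊κn⌋) does not belong to the profile of E_n. -/
/-- A triple `(α, β, γ)` belongs to the profile of `E ⊆ X × Y`. -/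
def InProfile {X Y : Type*} (E : Set (X × Y)) (α β γ : ℕ) : Prop :=
  ∃ (f : Fin (2 ^ α) × Fin (2 ^ γ) → X) (g : Fin (2 ^ β) × Fin (2 ^ γ) → Y),
    ∀ p ∈ E, ∃ (a : Fin (2 ^ α)) (b : Fin (2 ^ β)) (c : Fin (2 ^ γ)),
      f (a, c) = p.1 ∧ g (b, c) = p.2

/-!
A profile triple `(α, β, γ)` covers the distance-`k` pairs of the cube `{0, 1}ⁿ` by `2 ^ γ`
rectangles `A × B` with `|A| ≤ 2 ^ α` and `|B| ≤ 2 ^ β`. Weigh a pair by the transition probability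
of `n` independent bits, each flipped with probability `e = k / n ≤ 1 / 2`. Two-function
hypercontractivity, that is Bonami's two-point inequality tensorized over the coordinates, bounds
the weight of a rectangle by `2 ^ (n (1 - 1 / (1 - e))) * (|A| |B|) ^ (1 / (2 - 2 e))`. On the
other hand, `k` is the mode of the binomial distribution with parameters `n` and `k / n`, so the
distance-`k` pairs have total weight at least `2 ^ n / (n + 1)`. Comparing exponents gives
`(n - (α + β) / 2) / (1 - e) - γ ≤ log₂ (n + 1)`, which contradicts the strict inequality of the
rates once `n` is large.
-/

section TwoPoint

variable {q t a b : ℝ}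

lemma two_le_rpow_one_add_add_rpow_one_sub (hq : q ≤ 0) (ht : |t| < 1) :
    2 ≤ (1 + t) ^ q + (1 - t) ^ q := by
  obtain ⟨ht₁, ht₂⟩ := abs_lt.1 ht
  have hprod : 1 ≤ (1 + t) ^ q * (1 - t) ^ q := by
    rw [← Real.mul_rpow (by linarith) (by linarith)]
    exact Real.one_le_rpow_of_pos_of_le_one_of_nonpos (by nlinarith)
      (by nlinarith [sq_nonneg t]) hq
  have hadd : 0 ≤ (1 + t) ^ q := Real.rpow_nonneg (by linarith) q
  have hsub : 0 ≤ (1 - t) ^ q := Real.rpow_nonneg (by linarith) q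
  nlinarith [sq_nonneg ((1 + t) ^ q - (1 - t) ^ q)]

lemma hasDerivAt_rpow_one_add (h : 1 + t ≠ 0 ∨ 1 ≤ q) :
    HasDerivAt (fun x : ℝ ↦ (1 + x) ^ q) (q * (1 + t) ^ (q - 1)) t := by
  simpa using ((hasDerivAt_id t).const_add 1).rpow_const h

lemma hasDerivAt_rpow_one_sub (h : 1 - t ≠ 0 ∨ 1 ≤ q) :
    HasDerivAt (fun x : ℝ ↦ (1 - x) ^ q) (-(q * (1 - t) ^ (q - 1))) t := by
  simpa using ((hasDerivAt_id t).const_sub 1).rpow_const h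

lemma two_mul_mul_le_rpow_one_add_sub_rpow_one_sub (hq₀ : 0 ≤ q) (hq₁ : q ≤ 1)
    (ht₀ : 0 ≤ t) (ht₁ : t < 1) : 2 * q * t ≤ (1 + t) ^ q - (1 - t) ^ q := by
  let F : ℝ → ℝ := fun x ↦ (1 + x) ^ q - (1 - x) ^ q - 2 * q * x
  have hF : ∀ x ∈ Set.Ico (0 : ℝ) 1,
      HasDerivAt F (q * ((1 + x) ^ (q - 1) + (1 - x) ^ (q - 1) - 2)) x := fun x hx ↦ by
    refine (((hasDerivAt_rpow_one_add (.inl (by linarith [hx.1]))).sub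
      (hasDerivAt_rpow_one_sub (.inl (by linarith [hx.2])))).sub
      (hasDerivAt_const_mul (2 * q))).congr_deriv ?_
    ring
  have hmono : MonotoneOn F (Set.Ico 0 1) :=
    monotoneOn_of_hasDerivWithinAt_nonneg (convex_Ico 0 1)
      (fun x hx ↦ (hF x hx).continuousAt.continuousWithinAt)
      (fun x hx ↦ (hF x (interior_subset hx)).hasDerivWithinAt) fun x hx ↦ by
        have hx := interior_subset hx
        have := two_le_rpow_one_add_add_rpow_one_sub (sub_nonpos.2 hq₁)
          (abs_lt.2 ⟨by linarith [hx.1], hx.2⟩)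
        exact mul_nonneg hq₀ (by linarith)
  have := hmono ⟨le_rfl, one_pos⟩ ⟨ht₀, ht₁⟩ ht₀
  simp only [F, add_zero, sub_zero, mul_zero, sub_self] at this
  linarith

lemma two_add_mul_sq_le_rpow_one_add_add_rpow_one_sub (hq₀ : 0 ≤ q) (hq₁ : q ≤ 1)
    (ht₀ : 0 ≤ t) (ht₁ : t ≤ 1) :
    2 + (1 + q) * q * t ^ 2 ≤ (1 + t) ^ (1 + q) + (1 - t) ^ (1 + q) := by
  let F : ℝ → ℝ := fun x ↦ (1 + x) ^ (1 + q) + (1 - x) ^ (1 + q) - (1 + q) * q * x ^ 2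
  have hF : ∀ x, HasDerivAt F ((1 + q) * ((1 + x) ^ q - (1 - x) ^ q - 2 * q * x)) x := fun x ↦ by
    refine (((hasDerivAt_rpow_one_add (.inr (by linarith))).add
      (hasDerivAt_rpow_one_sub (.inr (by linarith)))).sub
      ((hasDerivAt_pow 2 x).const_mul ((1 + q) * q))).congr_deriv ?_
    rw [add_sub_cancel_left]
    ring
  have hmono : MonotoneOn F (Set.Icc 0 1) :=
    monotoneOn_of_hasDerivWithinAt_nonneg (convex_Icc 0 1)
      (fun x _ ↦ (hF x).continuousAt.continuousWithinAt)
      (fun x _ ↦ (hF x).hasDerivWithinAt) fun x hx ↦ by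
        rw [interior_Icc] at hx
        have := two_mul_mul_le_rpow_one_add_sub_rpow_one_sub hq₀ hq₁ hx.1.le hx.2
        exact mul_nonneg (by linarith) (by linarith)
  have := hmono ⟨le_rfl, zero_le_one⟩ ⟨ht₀, ht₁⟩ ht₀
  simp only [F, add_zero, sub_zero, Real.one_rpow] at this
  linarith

lemma rpow_one_add_mul_sq_le (hq₀ : 0 ≤ q) (hq₁ : q ≤ 1) (ht₀ : 0 ≤ t) (ht₁ : t ≤ 1) :
    (1 + q * t ^ 2) ^ ((1 + q) / 2) ≤ ((1 + t) ^ (1 + q) + (1 - t) ^ (1 + q)) / 2 := by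
  have bernoulli : (1 + q * t ^ 2) ^ ((1 + q) / 2) ≤ 1 + (1 + q) / 2 * (q * t ^ 2) :=
    rpow_one_add_le_one_add_mul_self (by nlinarith [mul_nonneg hq₀ (sq_nonneg t)])
      (by linarith) (by linarith)
  linarith [two_add_mul_sq_le_rpow_one_add_add_rpow_one_sub hq₀ hq₁ ht₀ ht₁]

lemma rpow_sq_add_mul_sq_le (hq₀ : 0 ≤ q) (hq₁ : q ≤ 1) (hb : 0 ≤ b) (hba : b ≤ a) :
    (a ^ 2 + q * b ^ 2) ^ ((1 + q) / 2) ≤ ((a + b) ^ (1 + q) + (a - b) ^ (1 + q)) / 2 := by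
  rcases (hb.trans hba).eq_or_lt with rfl | ha
  · obtain rfl : b = 0 := le_antisymm hba hb
    simp [show (1 + q) / 2 ≠ 0 by positivity, show 1 + q ≠ 0 by positivity]
  · obtain ⟨t, rfl⟩ : ∃ t, b = a * t := ⟨b / a, (mul_div_cancel₀ b ha.ne').symm⟩
    have ht₀ : 0 ≤ t := nonneg_of_mul_nonneg_right hb ha
    have ht₁ : t ≤ 1 := (mul_le_iff_le_one_right ha).1 hba
    have hpow : (a ^ 2) ^ ((1 + q) / 2) = a ^ (1 + q) := by
      rw [← Real.rpow_natCast_mul ha.le, Nat.cast_two, mul_div_cancel₀ _ two_ne_zero]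
    calc (a ^ 2 + q * (a * t) ^ 2) ^ ((1 + q) / 2)
        = a ^ (1 + q) * (1 + q * t ^ 2) ^ ((1 + q) / 2) := by
          rw [← hpow, ← Real.mul_rpow (by positivity) (by positivity)]
          ring_nf
      _ ≤ a ^ (1 + q) * (((1 + t) ^ (1 + q) + (1 - t) ^ (1 + q)) / 2) := by
          gcongr
          exact rpow_one_add_mul_sq_le hq₀ hq₁ ht₀ ht₁
      _ = ((a + a * t) ^ (1 + q) + (a - a * t) ^ (1 + q)) / 2 := by
          rw [← mul_one_add, ← mul_one_sub, Real.mul_rpow ha.le (by linarith),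
            Real.mul_rpow ha.le (by linarith)]
          ring

-- Bonami's two-point inequality: here `(a + b) / 2` and `(a - b) / 2` are the Fourier
-- coefficients of the function on two points with values `a` and `b`.
lemma sqrt_sq_add_mul_sq_le (hq₀ : 0 ≤ q) (hq₁ : q ≤ 1) (ha : 0 ≤ a) (hb : 0 ≤ b) :
    √(((a + b) / 2) ^ 2 + q * ((a - b) / 2) ^ 2) ≤
      ((a ^ (1 + q) + b ^ (1 + q)) / 2) ^ (1 / (1 + q)) := by
  wlog hba : b ≤ a generalizing a b
  · convert this hb ha (by linarith) using 3 <;> ring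
  have hpow := rpow_sq_add_mul_sq_le (a := (a + b) / 2) (b := (a - b) / 2) hq₀ hq₁
    (by linarith) (by linarith)
  rw [show (a + b) / 2 + (a - b) / 2 = a by ring, show (a + b) / 2 - (a - b) / 2 = b by ring]
    at hpow
  rw [Real.sqrt_eq_rpow, show (1 : ℝ) / 2 = (1 + q) / 2 * (1 / (1 + q)) by field_simp,
    Real.rpow_mul (by positivity)]
  gcongr

end TwoPoint

section BilinLpBound

open Finset

variable {X X' Y Y' : Type*} [Fintype X] [Fintype X'] [Fintype Y] [Fintype Y']
  {K : X → Y → ℝ} {L : X' → Y' → ℝ} {p q C D : ℝ}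

/-- The bilinear form with kernel `K` has norm at most `C` from `ℓ^p × ℓ^q` to `ℝ`, tested on
nonnegative functions; both norms are taken with respect to the counting measure. On indicator
functions this bounds the weight of a rectangle. -/
def HasBilinLpBound (K : X → Y → ℝ) (p q C : ℝ) : Prop :=
  ∀ (f : X → ℝ) (g : Y → ℝ), (∀ x, 0 ≤ f x) → (∀ y, 0 ≤ g y) →
    ∑ x, ∑ y, K x y * (f x * g y) ≤
      C * ((∑ x, f x ^ p) ^ (1 / p) * (∑ y, g y ^ q) ^ (1 / q))

namespace HasBilinLpBound

theorem prod (hK : HasBilinLpBound K p q C) (hL : HasBilinLpBound L p q D) (hp : p ≠ 0)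
    (hq : q ≠ 0) (hK₀ : ∀ x y, 0 ≤ K x y) (hD : 0 ≤ D) :
    HasBilinLpBound (fun (x : X × X') (y : Y × Y') ↦ K x.1 y.1 * L x.2 y.2) p q (C * D) := by
  intro f g hf hg
  have hfp (x) : 0 ≤ ∑ x', f (x, x') ^ p := sum_nonneg fun _ _ ↦ Real.rpow_nonneg (hf _) p
  have hgq (y) : 0 ≤ ∑ y', g (y, y') ^ q := sum_nonneg fun _ _ ↦ Real.rpow_nonneg (hg _) q
  let F : X → ℝ := fun x ↦ (∑ x', f (x, x') ^ p) ^ (1 / p)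
  let G : Y → ℝ := fun y ↦ (∑ y', g (y, y') ^ q) ^ (1 / q)
  have hF (x) : F x ^ p = ∑ x', f (x, x') ^ p := by
    simp only [F, one_div, Real.rpow_inv_rpow (hfp x) hp]
  have hG (y) : G y ^ q = ∑ y', g (y, y') ^ q := by
    simp only [G, one_div, Real.rpow_inv_rpow (hgq y) hq]
  calc ∑ x : X × X', ∑ y : Y × Y', K x.1 y.1 * L x.2 y.2 * (f x * g y)
      = ∑ x, ∑ y, K x y * ∑ x', ∑ y', L x' y' * (f (x, x') * g (y, y')) := by
        simp only [Fintype.sum_prod_type, mul_sum, mul_assoc]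
        exact sum_congr rfl fun x _ ↦ sum_comm
    _ ≤ ∑ x, ∑ y, K x y * (D * (F x * G y)) := by
        gcongr with x _ y _
        · exact hK₀ x y
        · exact hL _ _ (fun _ ↦ hf _) fun _ ↦ hg _
    _ = D * ∑ x, ∑ y, K x y * (F x * G y) := by
        simp only [mul_sum, mul_left_comm D]
    _ ≤ D * (C * ((∑ x, F x ^ p) ^ (1 / p) * (∑ y, G y ^ q) ^ (1 / q))) := by
        gcongr
        exact hK F G (fun x ↦ Real.rpow_nonneg (hfp x) _) fun y ↦ Real.rpow_nonneg (hgq y) _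
    _ = C * D * ((∑ x, f x ^ p) ^ (1 / p) * (∑ y, g y ^ q) ^ (1 / q)) := by
        simp only [hF, hG, Fintype.sum_prod_type]
        ring

theorem of_comp_equiv (e : X' ≃ X) (e' : Y' ≃ Y)
    (h : HasBilinLpBound (fun x y ↦ K (e x) (e' y)) p q C) : HasBilinLpBound K p q C := by
  intro f g hf hg
  have hrow (x) : ∑ y, K x (e' y) * (f x * g (e' y)) = ∑ y, K x y * (f x * g y) :=
    e'.sum_comp fun y ↦ K x y * (f x * g y)
  simpa only [Function.comp_apply, hrow, e.sum_comp (fun x ↦ ∑ y, K x y * (f x * g y)),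
    e.sum_comp (fun x ↦ f x ^ p), e'.sum_comp (fun y ↦ g y ^ q)]
    using h (f ∘ e) (g ∘ e') (fun _ ↦ hf _) fun _ ↦ hg _

theorem pi (hK : HasBilinLpBound K p q C) (hp : p ≠ 0) (hq : q ≠ 0) (hK₀ : ∀ x y, 0 ≤ K x y)
    (hC : 0 ≤ C) (n : ℕ) :
    HasBilinLpBound (fun (x : Fin n → X) (y : Fin n → Y) ↦ ∏ i, K (x i) (y i)) p q (C ^ n) := by
  induction n with
  | zero =>
    intro f g hf hg
    simp [← Real.rpow_mul, hf, hg, hp, hq]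
  | succ n ih =>
    refine of_comp_equiv (Fin.consEquiv fun _ ↦ X) (Fin.consEquiv fun _ ↦ Y) ?_
    simpa [Fin.consEquiv, Fin.prod_univ_succ, pow_succ'] using
      hK.prod ih hp hq hK₀ (pow_nonneg hC n)

theorem sum_product_le (hK : HasBilinLpBound K p q C) (hp : p ≠ 0) (hq : q ≠ 0) (A : Finset X)
    (B : Finset Y) :
    ∑ z ∈ A ×ˢ B, K z.1 z.2 ≤ C * ((#A : ℝ) ^ (1 / p) * (#B : ℝ) ^ (1 / q)) := by
  classical
  have := hK (fun x ↦ if x ∈ A then 1 else 0) (fun y ↦ if y ∈ B then 1 else 0)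
    (fun _ ↦ by positivity) fun _ ↦ by positivity
  simpa [ite_pow, Real.zero_rpow, hp, hq, sum_product, apply_ite (· ^ p), apply_ite (· ^ q)]
    using this

end HasBilinLpBound

end BilinLpBound

section Profile

open Finset

variable {X Y : Type*} {α β γ : ℕ}

lemma InProfile.exists_cover {E : Set (X × Y)} (h : InProfile E α β γ) :
    ∃ (A : Fin (2 ^ γ) → Finset X) (B : Fin (2 ^ γ) → Finset Y),
      (∀ c, #(A c) ≤ 2 ^ α) ∧ (∀ c, #(B c) ≤ 2 ^ β) ∧ ∀ z ∈ E, ∃ c, z ∈ A c ×ˢ B c := by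
  classical
  obtain ⟨f, g, hfg⟩ := h
  refine ⟨fun c ↦ univ.image fun a ↦ f (a, c), fun c ↦ univ.image fun b ↦ g (b, c),
    fun c ↦ card_image_le.trans_eq (by simp), fun c ↦ card_image_le.trans_eq (by simp),
    fun z hz ↦ ?_⟩
  obtain ⟨a, b, c, ha, hb⟩ := hfg z hz
  exact ⟨c, mem_product.2
    ⟨mem_image.2 ⟨a, mem_univ a, ha⟩, mem_image.2 ⟨b, mem_univ b, hb⟩⟩⟩

theorem InProfile.sum_le [Fintype X] [Fintype Y] {K : X → Y → ℝ} {p q C : ℝ}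
    {E : Finset (X × Y)} (hE : InProfile (E : Set (X × Y)) α β γ) (hK : HasBilinLpBound K p q C)
    (hp : 0 < p) (hq : 0 < q) (hK₀ : ∀ x y, 0 ≤ K x y) (hC : 0 ≤ C) :
    ∑ z ∈ E, K z.1 z.2 ≤ 2 ^ γ * (C * ((2 ^ α) ^ (1 / p) * (2 ^ β) ^ (1 / q))) := by
  classical
  obtain ⟨A, B, hA, hB, hcover⟩ := hE.exists_cover
  have hA' (c) : (#(A c) : ℝ) ≤ 2 ^ α := mod_cast hA c
  have hB' (c) : (#(B c) : ℝ) ≤ 2 ^ β := mod_cast hB c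
  choose! c hc using hcover
  calc ∑ z ∈ E, K z.1 z.2
      = ∑ i, ∑ z ∈ E with c z = i, K z.1 z.2 := (sum_fiberwise E c _).symm
    _ ≤ ∑ i, ∑ z ∈ A i ×ˢ B i, K z.1 z.2 := by
        gcongr with i
        · exact fun z _ _ ↦ hK₀ z.1 z.2
        · intro z hz
          obtain ⟨hzE, rfl⟩ := mem_filter.1 hz
          exact hc z hzE
    _ ≤ ∑ _i : Fin (2 ^ γ), C * ((2 ^ α) ^ (1 / p) * (2 ^ β) ^ (1 / q)) := by
        gcongr with i
        refine (hK.sum_product_le hp.ne' hq.ne' _ _).trans ?_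
        gcongr
        exacts [hA' i, hB' i]
    _ = 2 ^ γ * (C * ((2 ^ α) ^ (1 / p) * (2 ^ β) ^ (1 / q))) := by
        simp

end Profile

section FlipKernel

open Finset

variable {e : ℝ}

/-- Transition kernel of the binary symmetric channel with crossover probability `e`; its tensor
powers weigh the pairs of points of the cube by their Hamming distance. -/
def flipKernel (e : ℝ) (x y : Bool) : ℝ := if x = y then 1 - e else e

lemma flipKernel_nonneg (he₀ : 0 ≤ e) (he₁ : e ≤ 1) (x y : Bool) : 0 ≤ flipKernel e x y := by
  unfold flipKernel
  split_ifs <;> linarith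

lemma mul_add_mul_mul_le_sqrt_mul_sqrt {a b c d q : ℝ} (hq : 0 ≤ q) :
    a * c + q * (b * d) ≤ √(a ^ 2 + q * b ^ 2) * √(c ^ 2 + q * d ^ 2) := by
  rw [← Real.sqrt_mul (by positivity)]
  apply Real.le_sqrt_of_sq_le
  linear_combination q * sq_nonneg (a * d - b * c)

theorem hasBilinLpBound_flipKernel (he₀ : 0 ≤ e) (he₁ : e ≤ 1 / 2) :
    HasBilinLpBound (flipKernel e) (2 - 2 * e) (2 - 2 * e) (2 ^ (1 - 1 / (1 - e))) := by
  intro f g hf hg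
  have hp : 2 - 2 * e = 1 + (1 - 2 * e) := by ring
  have norm_const : 2 * ((1 / 2 : ℝ) ^ (1 / (2 - 2 * e)) * (1 / 2) ^ (1 / (2 - 2 * e))) =
      2 ^ (1 - 1 / (1 - e)) := by
    have he : 1 - e ≠ 0 := by linarith
    rw [← Real.rpow_add (by norm_num), one_div 2, Real.inv_rpow two_pos.le,
      Real.rpow_sub two_pos, Real.rpow_one, div_eq_mul_inv]
    congr 3
    field_simp
    norm_num
  have bonami (f : Bool → ℝ) (hf : ∀ x, 0 ≤ f x) :
      √(((f true + f false) / 2) ^ 2 + (1 - 2 * e) * ((f true - f false) / 2) ^ 2) ≤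
        (1 / 2) ^ (1 / (2 - 2 * e)) * (∑ x, f x ^ (2 - 2 * e)) ^ (1 / (2 - 2 * e)) := by
    rw [← Real.mul_rpow (by norm_num)
      (sum_nonneg fun x _ ↦ Real.rpow_nonneg (hf x) _), Fintype.sum_bool, one_div_mul_eq_div, hp]
    exact sqrt_sq_add_mul_sq_le (by linarith) (by linarith) (hf true) (hf false)
  calc ∑ x, ∑ y, flipKernel e x y * (f x * g y)
      = 2 * ((f true + f false) / 2 * ((g true + g false) / 2) +
          (1 - 2 * e) * ((f true - f false) / 2 * ((g true - g false) / 2))) := by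
        simp only [flipKernel, Fintype.sum_bool, if_true, Bool.true_eq_false, Bool.false_eq_true,
          if_false]
        ring
    _ ≤ 2 * (√(((f true + f false) / 2) ^ 2 + (1 - 2 * e) * ((f true - f false) / 2) ^ 2) *
          √(((g true + g false) / 2) ^ 2 + (1 - 2 * e) * ((g true - g false) / 2) ^ 2)) := by
        gcongr
        exact mul_add_mul_mul_le_sqrt_mul_sqrt (by linarith)
    _ ≤ 2 * ((1 / 2) ^ (1 / (2 - 2 * e)) * (∑ x, f x ^ (2 - 2 * e)) ^ (1 / (2 - 2 * e)) *
          ((1 / 2) ^ (1 / (2 - 2 * e)) * (∑ y, g y ^ (2 - 2 * e)) ^ (1 / (2 - 2 * e)))) := by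
        gcongr
        exacts [(Real.sqrt_nonneg _).trans (bonami f hf), bonami f hf, bonami g hg]
    _ = 2 ^ (1 - 1 / (1 - e)) * ((∑ x, f x ^ (2 - 2 * e)) ^ (1 / (2 - 2 * e)) *
          (∑ y, g y ^ (2 - 2 * e)) ^ (1 / (2 - 2 * e))) := by
        rw [← norm_const]
        ring

lemma prod_flipKernel {ι : Type*} [Fintype ι] (e : ℝ) (x y : ι → Bool) :
    ∏ i, flipKernel e (x i) (y i) =
      e ^ hammingDist x y * (1 - e) ^ (Fintype.card ι - hammingDist x y) := by
  have hagree : #{i | x i = y i} = Fintype.card ι - hammingDist x y :=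
    Nat.eq_sub_of_add_eq (card_filter_add_card_filter_not fun i ↦ x i = y i)
  simp only [flipKernel, prod_ite, prod_const, hagree]
  exact mul_comm _ _

end FlipKernel

section Hamming

open Finset

variable {ι : Type*} [Fintype ι] [DecidableEq ι]

lemma card_filter_hammingDist_eq (x : ι → Bool) (k : ℕ) :
    #{y | hammingDist x y = k} = (Fintype.card ι).choose k := by
  have hflip (s : Finset ι) : ({i | x i ≠ xor (x i) (i ∈ s)} : Finset ι) = s := by
    ext i
    by_cases hi : i ∈ s <;> simp [hi]
  rw [← card_univ, ← card_powersetCard]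
  refine card_nbij' (fun y ↦ ({i | x i ≠ y i} : Finset ι)) (fun s i ↦ xor (x i) (i ∈ s))
    (fun y hy ↦ ?_) (fun s hs ↦ ?_) (fun y _ ↦ ?_) fun s _ ↦ hflip s
  · simpa [mem_powersetCard, hammingDist] using hy
  · simpa only [coe_filter, mem_univ, true_and, Set.mem_ofPred_eq, hammingDist, hflip] using
      (mem_powersetCard_univ.1 hs)
  · ext i
    cases x i <;> cases hy : y i <;> simp [hy]

lemma card_filter_hammingDist_fst_snd_eq (ι : Type*) [Fintype ι] [DecidableEq ι] (k : ℕ) :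
    #{z : (ι → Bool) × (ι → Bool) | hammingDist z.1 z.2 = k} =
      2 ^ Fintype.card ι * (Fintype.card ι).choose k := by
  simp_rw [card_filter, Fintype.sum_prod_type, ← card_filter, card_filter_hammingDist_eq]
  simp

end Hamming

section BinomialMode

open Finset

/-- The `j`-th term in the binomial expansion of `(a + b) ^ (a + b)`, for `j ≤ a + b`. It is the
probability of `j` under the binomial distribution with parameters `a + b` and `a / (a + b)`, scaled
by `(a + b) ^ (a + b)` to be a natural number. -/
def binomialTerm (a b j : ℕ) : ℕ := (a + b).choose j * a ^ j * b ^ (a + b - j)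

lemma binomialTerm_succ_mul {a b j : ℕ} (hj : j < a + b) :
    binomialTerm a b (j + 1) * ((j + 1) * b) = binomialTerm a b j * ((a + b - j) * a) := by
  have hpow : b ^ (a + b - j) = b ^ (a + b - (j + 1)) * b := by
    rw [← pow_succ]
    congr 1
    omega
  calc binomialTerm a b (j + 1) * ((j + 1) * b)
      = (a + b).choose (j + 1) * (j + 1) * a ^ (j + 1) * (b ^ (a + b - (j + 1)) * b) := by
        rw [binomialTerm]
        ring
    _ = binomialTerm a b j * ((a + b - j) * a) := by
        rw [Nat.choose_succ_right_eq, ← hpow, binomialTerm]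
        ring

lemma monotoneOn_binomialTerm (a b : ℕ) : MonotoneOn (binomialTerm a b) (Set.Iic a) := by
  refine monotoneOn_of_le_add_one Set.ordConnected_Iic fun j _ _ hj ↦ ?_
  rw [Set.mem_Iic] at hj
  rcases b.eq_zero_or_pos with rfl | hb
  · simp [binomialTerm, show a - j ≠ 0 by omega]
  refine Nat.le_of_mul_le_mul_right ?_ (Nat.mul_pos j.succ_pos hb)
  rw [binomialTerm_succ_mul (by omega), mul_comm (j + 1)]
  gcongr
  omega

lemma antitoneOn_binomialTerm (a b : ℕ) : AntitoneOn (binomialTerm a b) (Set.Icc a (a + b)) := by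
  refine antitoneOn_of_add_one_le Set.ordConnected_Icc fun j _ hj hj' ↦ ?_
  have hb : 0 < b := by have := hj.1; have := hj'.2; omega
  refine Nat.le_of_mul_le_mul_right ?_ (Nat.mul_pos j.succ_pos hb)
  rw [binomialTerm_succ_mul hj'.2, mul_comm (j + 1)]
  gcongr
  · have := hj.1; omega
  · exact hj.1.trans j.le_succ

lemma binomialTerm_le {a b j : ℕ} (hj : j ≤ a + b) : binomialTerm a b j ≤ binomialTerm a b a := by
  rcases le_total j a with h | h
  · exact monotoneOn_binomialTerm a b h Set.self_mem_Iic h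
  · exact antitoneOn_binomialTerm a b ⟨le_rfl, a.le_add_right b⟩ ⟨h, hj⟩ h

lemma add_pow_add_le_succ_mul_binomialTerm (a b : ℕ) :
    (a + b) ^ (a + b) ≤ (a + b + 1) * binomialTerm a b a := by
  calc (a + b) ^ (a + b)
      = ∑ j ∈ range (a + b + 1), binomialTerm a b j := by
        rw [add_pow]
        exact sum_congr rfl fun j _ ↦ by rw [Nat.cast_id, binomialTerm]; ring
    _ ≤ ∑ _j ∈ range (a + b + 1), binomialTerm a b a :=
        sum_le_sum fun j hj ↦ binomialTerm_le (mem_range_succ_iff.1 hj)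
    _ = (a + b + 1) * binomialTerm a b a := by
        rw [sum_const, card_range, smul_eq_mul]

lemma one_le_succ_mul_choose_mul_pow {n k : ℕ} (hk : k ≤ n) :
    1 ≤ ((n : ℝ) + 1) * (n.choose k * ((k / n : ℝ) ^ k * (1 - k / n) ^ (n - k))) := by
  rcases n.eq_zero_or_pos with rfl | hn
  · simp [Nat.le_zero.1 hk]
  have hn' : (0 : ℝ) < n := mod_cast hn
  have hmode : (n : ℝ) ^ n ≤ (n + 1) * (n.choose k * k ^ k * (n - k) ^ (n - k)) := by
    have := add_pow_add_le_succ_mul_binomialTerm k (n - k)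
    rw [binomialTerm, Nat.add_sub_cancel' hk] at this
    rw [← Nat.cast_sub hk]
    exact_mod_cast this
  calc (1 : ℝ) ≤ (n + 1) * (n.choose k * k ^ k * (n - k) ^ (n - k)) / n ^ n :=
        (one_le_div (by positivity)).2 hmode
    _ = (n + 1) * (n.choose k * ((k / n : ℝ) ^ k * (1 - k / n) ^ (n - k))) := by
        rw [one_sub_div hn'.ne', div_pow, div_pow, ← pow_mul_pow_sub (n : ℝ) hk]
        field_simp

end BinomialMode

section HammingSphere

open Finset Filter Topology

/-- The pairs of points of the cube `{0, 1}ⁿ` at Hamming distance exactly `k`, as a `Finset` so that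
kernels can be summed over it. -/
def hammingPairs (n k : ℕ) : Finset ((Fin n → Bool) × (Fin n → Bool)) :=
  {z | hammingDist z.1 z.2 = k}

lemma two_pow_le_succ_mul_sum_prod_flipKernel {n k : ℕ} (hk : k ≤ n) :
    (2 : ℝ) ^ n ≤
      (n + 1) * ∑ z ∈ hammingPairs n k, ∏ i, flipKernel (k / n) (z.1 i) (z.2 i) := by
  have hsum : ∑ z ∈ hammingPairs n k, ∏ i, flipKernel (k / n) (z.1 i) (z.2 i) =
      2 ^ n * (n.choose k * ((k / n : ℝ) ^ k * (1 - k / n) ^ (n - k))) := by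
    rw [sum_congr rfl fun z hz ↦ (prod_flipKernel _ z.1 z.2).trans
      (by rw [(mem_filter.1 hz).2, Fintype.card_fin]), sum_const, hammingPairs,
      card_filter_hammingDist_fst_snd_eq, Fintype.card_fin, nsmul_eq_mul]
    push_cast
    ring
  rw [hsum, mul_left_comm]
  exact le_mul_of_one_le_right (by positivity) (one_le_succ_mul_choose_mul_pow hk)

theorem InProfile.le_logb_of_hammingDist_eq {n k α β γ : ℕ} (hk : 2 * k ≤ n)
    (h : InProfile {z : (Fin n → Bool) × (Fin n → Bool) | hammingDist z.1 z.2 = k} α β γ) :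
    ((n : ℝ) - (α + β) / 2) / (1 - k / n) - γ ≤ Real.logb 2 (n + 1) := by
  rw [show {z : (Fin n → Bool) × (Fin n → Bool) | hammingDist z.1 z.2 = k} = hammingPairs n k by
    simp [hammingPairs]] at h
  set e : ℝ := k / n
  have he₀ : 0 ≤ e := by positivity
  have he₁ : e ≤ 1 / 2 := by
    apply div_le_of_le_mul₀ (by positivity) (by norm_num)
    have : (2 : ℝ) * k ≤ n := mod_cast hk
    linarith
  have hp : 0 < 2 - 2 * e := by linarith
  have he₁' : 1 - e ≠ 0 := by linarith
  have hK := flipKernel_nonneg he₀ (he₁.trans (by norm_num))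
  have hupper := h.sum_le ((hasBilinLpBound_flipKernel he₀ he₁).pi hp.ne' hp.ne' hK
    (by positivity) n) hp hp (fun x y ↦ prod_nonneg fun i _ ↦ hK (x i) (y i)) (by positivity)
  have hpow : (2 : ℝ) ^ γ * ((2 ^ (1 - 1 / (1 - e))) ^ n *
      ((2 ^ α) ^ (1 / (2 - 2 * e)) * (2 ^ β) ^ (1 / (2 - 2 * e)))) =
      2 ^ n / 2 ^ ((n - (α + β) / 2) / (1 - e) - γ) := by
    simp only [← Real.rpow_natCast, ← Real.rpow_mul two_pos.le, ← Real.rpow_add two_pos,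
      ← Real.rpow_sub two_pos]
    congr 1
    rw [show 2 - 2 * e = 2 * (1 - e) by ring]
    field_simp
    ring
  rw [Real.le_logb_iff_rpow_le one_lt_two (by positivity)]
  have := (two_pow_le_succ_mul_sum_prod_flipKernel (by omega)).trans
    (mul_le_mul_of_nonneg_left (hupper.trans_eq hpow) (by positivity))
  rw [mul_div_left_comm] at this
  exact (one_le_div (by positivity)).1 ((le_mul_iff_one_le_right (by positivity)).1 this)

theorem InProfile.rate_le_of_hammingDist_eq {n k α β γ : ℕ} (hn : 0 < n) (hk : 2 * k ≤ n)
    (h : InProfile {z : (Fin n → Bool) × (Fin n → Bool) | hammingDist z.1 z.2 = k} α β γ) :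
    (1 - ((α : ℝ) / n + β / n) / 2) / (1 - k / n) - γ / n ≤ Real.logb 2 (n + 1) / n := by
  have hn' : (n : ℝ) ≠ 0 := by positivity
  calc (1 - ((α : ℝ) / n + β / n) / 2) / (1 - k / n) - γ / n
      = ((n - (α + β) / 2) / (1 - k / n) - γ) / n := by
        rw [sub_div (_ / _) (γ : ℝ), div_right_comm _ (1 - (k : ℝ) / n), sub_div (n : ℝ),
          div_self hn', div_right_comm _ 2, ← add_div]
    _ ≤ Real.logb 2 (n + 1) / n := by
        gcongr
        exact h.le_logb_of_hammingDist_eq hk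

lemma tendsto_logb_natCast_add_one_div_atTop :
    Tendsto (fun n : ℕ ↦ Real.logb 2 (n + 1) / n) atTop (𝓝 0) := by
  simpa [Function.comp_def] using
    (Real.tendsto_pow_logb_div_mul_add_atTop (b := 2) 1 (-1) 1 one_ne_zero).comp
      (tendsto_atTop_add_const_right _ 1 tendsto_natCast_atTop_atTop)

end HammingSphere

theorem stmt16_general (ε σ τ κ : ℝ) (hε₀ : 0 ≤ ε) (hε₁ : ε ≤ 1 / 2) (hσ : 0 ≤ σ) (hτ : 0 ≤ τ)
    (hκ₀ : 0 ≤ κ) (hκ : κ < (1 - (σ + τ) / 2) / (1 - ε)) :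
    ∃ N : ℕ, ∀ n ≥ N,
      ¬ InProfile
        {p : (Fin n → Bool) × (Fin n → Bool) | hammingDist p.1 p.2 = ⌊ε * n⌋₊}
        ⌊σ * n⌋₊ ⌊τ * n⌋₊ ⌊κ * n⌋₊ := by
  have hfloor {a : ℝ} (ha : 0 ≤ a) :
      Filter.Tendsto (fun n : ℕ ↦ (⌊a * n⌋₊ : ℝ) / n) Filter.atTop (nhds a) :=
    (tendsto_nat_floor_mul_div_atTop ha).comp tendsto_natCast_atTop_atTop
  have hgap := (((((hfloor hσ).add (hfloor hτ)).div_const 2).const_sub 1).div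
    ((hfloor hε₀).const_sub 1) (by linarith)).sub (hfloor hκ₀)
  obtain ⟨N, hN⟩ := Filter.eventually_atTop.1
    ((tendsto_logb_natCast_add_one_div_atTop.eventually_lt hgap (sub_pos.2 hκ)).and
      (Filter.eventually_gt_atTop 0))
  refine ⟨N, fun n hn hprofile ↦ ?_⟩
  obtain ⟨hlt, hn₀⟩ := hN n hn
  have hk : 2 * ⌊ε * n⌋₊ ≤ n := by
    have hle : (⌊ε * n⌋₊ : ℝ) ≤ ε * n := Nat.floor_le (by positivity)
    have : (2 : ℝ) * ⌊ε * n⌋₊ ≤ n := by nlinarith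
    exact_mod_cast this
  exact hlt.not_ge (hprofile.rate_le_of_hammingDist_eq hn₀ hk)

theorem stmt16 (ε τ κ : ℝ) (hε0 : 0 < ε) (hε1 : ε < 1 / 2)
    (hτ0 : 0 < τ) (hτ1 : τ < 1) (hκ0 : 0 < κ) (hκ1 : κ < 1)
    (hκ : κ < (1 - τ) / (1 - ε)) :
    ∃ N : ℕ, ∀ n ≥ N,
      ¬ InProfile
        {p : (Fin n → Bool) × (Fin n → Bool) | hammingDist p.1 p.2 = ⌊ε * n⌋₊}
        ⌊τ * n⌋₊ ⌊τ * n⌋₊ ⌊κ * n⌋₊ := by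
  exact stmt16_general ε τ τ κ hε0.le hε1.le hτ0.le hτ0.le hκ0.le (by rwa [add_self_div_two])
end

section
/- Chernoff inequality for negatively correlated variables: let Ω be a finite type equipped with a probability mass function P, and let X₁, …, X_n : Ω → {0, 1} be random variables that are negatively correlated, i.e. for every nonempty subset S ⊆ {1, …, n}, P(∀ i ∈ S, X_i = 1) ≤ Π_{i ∈ S} P(X_i = 1). Let μ = E[X₁ + ⋯ + X_n] and let δ > 0. Then P(X₁ + ⋯ + X_n ≥ (1 + δ)·μ) ≤ (exp(δ) / (1 + δ)^(1 + δ))^μ. -/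
open Finset

/-!
For `{0, 1}`-valued variables, expanding `exp (t * ∑ Xᵢ) = ∏ (1 + (exp t - 1) * Xᵢ)` writes the
moment generating function of the sum as a combination of the joint moments `E[∏_{i ∈ S} Xᵢ]` whose
coefficients `(exp t - 1) ^ |S|` are nonnegative for `t ≥ 0`. Negative correlation bounds each joint
moment by the product of the means, and refolding the product bounds the moment generating function
by `exp ((exp t - 1) * μ)`, that of a Poisson variable of the same mean `μ`. The exponential Markov
inequality at `t = log (1 + δ)` concludes.
-/

section

open MeasureTheory ProbabilityTheory
open Real (exp log)

lemma exp_mul_eq_one_add_mul {x : ℝ} (hx : x = 0 ∨ x = 1) (t : ℝ) :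
    exp (t * x) = 1 + (exp t - 1) * x := by
  rcases hx with rfl | rfl <;> simp

lemma exp_mul_sum_eq_sum_powerset {ι : Type*} {s : Finset ι} {x : ι → ℝ}
    (hx : ∀ i ∈ s, x i = 0 ∨ x i = 1) (t : ℝ) :
    exp (t * ∑ i ∈ s, x i) = ∑ S ∈ s.powerset, (exp t - 1) ^ #S * ∏ i ∈ S, x i := by
  calc exp (t * ∑ i ∈ s, x i)
      = ∏ i ∈ s, (1 + (exp t - 1) * x i) := by
        rw [mul_sum, Real.exp_sum]
        exact prod_congr rfl fun i hi ↦ exp_mul_eq_one_add_mul (hx i hi) t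
    _ = ∑ S ∈ s.powerset, (exp t - 1) ^ #S * ∏ i ∈ S, x i := by
        simp only [prod_one_add, prod_mul_distrib, prod_const]

section Measure

variable {Ω ι : Type*} [MeasurableSpace Ω] {P : Measure Ω} {X : ι → Ω → ℝ}

/-- Negative correlation of a family of `{0, 1}`-valued random variables: the variables of any
nonempty finite subfamily are simultaneously `1` with at most the probability they would have if
they were independent. Only the events `X i = 1` are constrained, so this is meaningful only
for `{0, 1}`-valued families. -/
def NegCorrelated (X : ι → Ω → ℝ) (P : Measure Ω) : Prop :=
  ∀ S : Finset ι, S.Nonempty →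
    P.real {ω | ∀ i ∈ S, X i ω = 1} ≤ ∏ i ∈ S, P.real {ω | X i ω = 1}

lemma nullMeasurableSet_forall_mem_eq_one (hX : ∀ i, AEMeasurable (X i) P) (S : Finset ι) :
    NullMeasurableSet {ω | ∀ i ∈ S, X i ω = 1} P := by
  simp only [Set.ofPred_forall]
  exact S.nullMeasurableSet_biInter fun i _ ↦
    (hX i).nullMeasurableSet_preimage (measurableSet_singleton 1)

lemma prod_ae_eq_indicator (h01 : ∀ i, ∀ᵐ ω ∂P, X i ω = 0 ∨ X i ω = 1) (S : Finset ι) :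
    (fun ω ↦ ∏ i ∈ S, X i ω) =ᵐ[P] {ω | ∀ i ∈ S, X i ω = 1}.indicator 1 := by
  have h01S : ∀ᵐ ω ∂P, ∀ i ∈ S, X i ω = 0 ∨ X i ω = 1 :=
    (Filter.eventually_all_finset S).2 fun i _ ↦ h01 i
  filter_upwards [h01S] with ω hω
  by_cases hone : ω ∈ {ω | ∀ i ∈ S, X i ω = 1}
  · rw [prod_eq_one hone, Set.indicator_of_mem hone, Pi.one_apply]
  · rw [Set.indicator_of_notMem hone]
    obtain ⟨i, hi, hne⟩ : ∃ i ∈ S, X i ω ≠ 1 := by simpa using hone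
    exact prod_eq_zero hi ((hω i hi).resolve_right hne)

lemma integral_prod_eq_measureReal (hX : ∀ i, AEMeasurable (X i) P)
    (h01 : ∀ i, ∀ᵐ ω ∂P, X i ω = 0 ∨ X i ω = 1) (S : Finset ι) :
    ∫ ω, ∏ i ∈ S, X i ω ∂P = P.real {ω | ∀ i ∈ S, X i ω = 1} := by
  rw [integral_congr_ae (prod_ae_eq_indicator h01 S),
    integral_indicator₀ (nullMeasurableSet_forall_mem_eq_one hX S)]
  simp

lemma integral_eq_measureReal_eq_one {Y : Ω → ℝ} (hY : AEMeasurable Y P)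
    (h01 : ∀ᵐ ω ∂P, Y ω = 0 ∨ Y ω = 1) : ∫ ω, Y ω ∂P = P.real {ω | Y ω = 1} := by
  simpa using integral_prod_eq_measureReal (X := fun _ : Unit ↦ Y) (fun _ ↦ hY) (fun _ ↦ h01) {()}

lemma integrable_prod_of_zero_or_one [IsFiniteMeasure P] (hX : ∀ i, AEMeasurable (X i) P)
    (h01 : ∀ i, ∀ᵐ ω ∂P, X i ω = 0 ∨ X i ω = 1) (S : Finset ι) :
    Integrable (fun ω ↦ ∏ i ∈ S, X i ω) P :=
  ((integrable_const (1 : ℝ)).indicator₀ (nullMeasurableSet_forall_mem_eq_one hX S)).congr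
    (prod_ae_eq_indicator h01 S).symm

lemma integrable_of_zero_or_one [IsFiniteMeasure P] {Y : Ω → ℝ} (hY : AEMeasurable Y P)
    (h01 : ∀ᵐ ω ∂P, Y ω = 0 ∨ Y ω = 1) : Integrable Y P := by
  simpa using integrable_prod_of_zero_or_one (X := fun _ : Unit ↦ Y) (fun _ ↦ hY) (fun _ ↦ h01) {()}

lemma exp_mul_sum_ae_eq_sum_powerset (h01 : ∀ i, ∀ᵐ ω ∂P, X i ω = 0 ∨ X i ω = 1)
    (s : Finset ι) (t : ℝ) :
    (fun ω ↦ exp (t * ∑ i ∈ s, X i ω)) =ᵐ[P]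
      fun ω ↦ ∑ S ∈ s.powerset, (exp t - 1) ^ #S * ∏ i ∈ S, X i ω := by
  filter_upwards [(Filter.eventually_all_finset s).2 fun i _ ↦ h01 i] with ω hω
  exact exp_mul_sum_eq_sum_powerset hω t

lemma integrable_exp_mul_sum_of_zero_or_one [IsFiniteMeasure P] (hX : ∀ i, AEMeasurable (X i) P)
    (h01 : ∀ i, ∀ᵐ ω ∂P, X i ω = 0 ∨ X i ω = 1) (s : Finset ι) (t : ℝ) :
    Integrable (fun ω ↦ exp (t * ∑ i ∈ s, X i ω)) P :=
  (integrable_finsetSum _ fun S _ ↦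
    (integrable_prod_of_zero_or_one hX h01 S).const_mul _).congr
    (exp_mul_sum_ae_eq_sum_powerset h01 s t).symm

lemma mgf_sum_eq_sum_powerset [IsFiniteMeasure P] (hX : ∀ i, AEMeasurable (X i) P)
    (h01 : ∀ i, ∀ᵐ ω ∂P, X i ω = 0 ∨ X i ω = 1) (s : Finset ι) (t : ℝ) :
    mgf (fun ω ↦ ∑ i ∈ s, X i ω) P t =
      ∑ S ∈ s.powerset, (exp t - 1) ^ #S * ∫ ω, ∏ i ∈ S, X i ω ∂P := by
  rw [mgf, integral_congr_ae (exp_mul_sum_ae_eq_sum_powerset h01 s t),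
    integral_finsetSum _ fun S _ ↦ (integrable_prod_of_zero_or_one hX h01 S).const_mul _]
  simp only [integral_const_mul]

namespace NegCorrelated

variable [IsProbabilityMeasure P]

lemma integral_prod_le (hneg : NegCorrelated X P) (hX : ∀ i, AEMeasurable (X i) P)
    (h01 : ∀ i, ∀ᵐ ω ∂P, X i ω = 0 ∨ X i ω = 1) (S : Finset ι) :
    ∫ ω, ∏ i ∈ S, X i ω ∂P ≤ ∏ i ∈ S, ∫ ω, X i ω ∂P := by
  rcases S.eq_empty_or_nonempty with rfl | hS
  · simp
  · simpa only [integral_prod_eq_measureReal hX h01,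
      integral_eq_measureReal_eq_one (hX _) (h01 _)] using hneg S hS

lemma mgf_sum_le (hneg : NegCorrelated X P) (hX : ∀ i, AEMeasurable (X i) P)
    (h01 : ∀ i, ∀ᵐ ω ∂P, X i ω = 0 ∨ X i ω = 1) (s : Finset ι) {t : ℝ} (ht : 0 ≤ t) :
    mgf (fun ω ↦ ∑ i ∈ s, X i ω) P t ≤ exp ((exp t - 1) * ∫ ω, ∑ i ∈ s, X i ω ∂P) := by
  have hc : 0 ≤ exp t - 1 := sub_nonneg.2 (Real.one_le_exp ht)
  have hmean (i : ι) : 0 ≤ ∫ ω, X i ω ∂P := by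
    rw [integral_eq_measureReal_eq_one (hX i) (h01 i)]
    exact measureReal_nonneg
  calc mgf (fun ω ↦ ∑ i ∈ s, X i ω) P t
      = ∑ S ∈ s.powerset, (exp t - 1) ^ #S * ∫ ω, ∏ i ∈ S, X i ω ∂P :=
        mgf_sum_eq_sum_powerset hX h01 s t
    _ ≤ ∑ S ∈ s.powerset, (exp t - 1) ^ #S * ∏ i ∈ S, ∫ ω, X i ω ∂P := by
        gcongr with S
        exact hneg.integral_prod_le hX h01 S
    _ = ∏ i ∈ s, (1 + (exp t - 1) * ∫ ω, X i ω ∂P) := by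
        simp only [prod_one_add, prod_mul_distrib, prod_const]
    _ ≤ exp (∑ i ∈ s, (exp t - 1) * ∫ ω, X i ω ∂P) :=
        Real.prod_one_add_le_exp_sum s fun i ↦ mul_nonneg hc (hmean i)
    _ = exp ((exp t - 1) * ∫ ω, ∑ i ∈ s, X i ω ∂P) := by
        rw [integral_finsetSum s fun i _ ↦ integrable_of_zero_or_one (hX i) (h01 i), mul_sum]

end NegCorrelated

lemma exp_neg_log_mul_mul_exp_eq_div_rpow {δ : ℝ} (hδ : -1 < δ) (μ : ℝ) :
    exp (-log (1 + δ) * ((1 + δ) * μ)) * exp (δ * μ) = (exp δ / (1 + δ) ^ (1 + δ)) ^ μ := by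
  have hpos : 0 < 1 + δ := by linarith
  rw [Real.rpow_def_of_pos hpos, ← Real.exp_sub, ← Real.exp_mul, ← Real.exp_add]
  ring_nf

theorem stmt18_general [IsProbabilityMeasure P] (hX : ∀ i, AEMeasurable (X i) P)
    (h01 : ∀ i, ∀ᵐ ω ∂P, X i ω = 0 ∨ X i ω = 1) (hneg : NegCorrelated X P) (s : Finset ι)
    (μ : ℝ) (hμ : μ = ∫ ω, ∑ i ∈ s, X i ω ∂P) (δ : ℝ) (hδ : 0 ≤ δ) :
    P.real {ω | (1 + δ) * μ ≤ ∑ i ∈ s, X i ω} ≤ (exp δ / (1 + δ) ^ (1 + δ)) ^ μ := by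
  have ht : 0 ≤ log (1 + δ) := Real.log_nonneg (by linarith)
  calc P.real {ω | (1 + δ) * μ ≤ ∑ i ∈ s, X i ω}
      ≤ exp (-log (1 + δ) * ((1 + δ) * μ)) * mgf (fun ω ↦ ∑ i ∈ s, X i ω) P (log (1 + δ)) :=
        measure_ge_le_exp_mul_mgf _ ht (integrable_exp_mul_sum_of_zero_or_one hX h01 s _)
    _ ≤ exp (-log (1 + δ) * ((1 + δ) * μ)) * exp (δ * μ) := by
        gcongr
        have hmgf := hneg.mgf_sum_le hX h01 s ht
        rwa [Real.exp_log (by linarith), add_sub_cancel_left, ← hμ] at hmgf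
    _ = (exp δ / (1 + δ) ^ (1 + δ)) ^ μ :=
        exp_neg_log_mul_mul_exp_eq_div_rpow (by linarith) μ

end Measure

section Finite

variable {Ω : Type*} [Fintype Ω] {w : Ω → ℝ}

/-- The `PMF` on a finite type with the given real weights. It carries the finite sums of the
elementary formulation over to measures. -/
noncomputable def pmfOfWeights (w : Ω → ℝ) (h0 : ∀ ω, 0 ≤ w ω) (h1 : ∑ ω, w ω = 1) : PMF Ω :=
  PMF.ofFintype (fun ω ↦ ENNReal.ofReal (w ω)) <| by
    rw [← ENNReal.ofReal_sum_of_nonneg fun ω _ ↦ h0 ω, h1, ENNReal.ofReal_one]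

variable (h0 : ∀ ω, 0 ≤ w ω) (h1 : ∑ ω, w ω = 1)
  [MeasurableSpace Ω] [MeasurableSingletonClass Ω]

lemma integral_pmfOfWeights (f : Ω → ℝ) :
    ∫ ω, f ω ∂(pmfOfWeights w h0 h1).toMeasure = ∑ ω, w ω * f ω := by
  simp [PMF.integral_eq_sum, pmfOfWeights, h0]

open scoped Classical in
lemma measureReal_pmfOfWeights (A : Set Ω) :
    (pmfOfWeights w h0 h1).toMeasure.real A = ∑ ω with ω ∈ A, w ω := by
  rw [← integral_indicator_one (.of_discrete (s := A)), integral_pmfOfWeights, sum_filter]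
  simp [Set.indicator_apply]

end Finite

end

open scoped Classical in
/-- Chernoff inequality for negatively correlated 0/1-valued random variables. -/
theorem stmt18 {Ω : Type*} [Fintype Ω] (P : Ω → ℝ)
    (hP0 : ∀ ω, 0 ≤ P ω) (hP1 : ∑ ω, P ω = 1)
    (n : ℕ) (Xv : Fin n → Ω → ℝ)
    (h01 : ∀ i ω, Xv i ω = 0 ∨ Xv i ω = 1)
    (hneg : ∀ S : Finset (Fin n), S.Nonempty →
      (∑ ω ∈ Finset.univ.filter (fun ω => ∀ i ∈ S, Xv i ω = 1), P ω) ≤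
        ∏ i ∈ S, ∑ ω ∈ Finset.univ.filter (fun ω => Xv i ω = 1), P ω)
    (μ : ℝ) (hμ : μ = ∑ ω, P ω * ∑ i, Xv i ω) (δ : ℝ) (hδ : 0 < δ) :
    (∑ ω ∈ Finset.univ.filter (fun ω => (1 + δ) * μ ≤ ∑ i, Xv i ω), P ω) ≤
      (Real.exp δ / (1 + δ) ^ (1 + δ)) ^ μ := by
  let : MeasurableSpace Ω := ⊤
  have hcorr : NegCorrelated Xv (pmfOfWeights P hP0 hP1).toMeasure := by
    simpa [NegCorrelated, measureReal_pmfOfWeights] using hneg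
  simpa [measureReal_pmfOfWeights] using
    stmt18_general (fun _ ↦ .of_discrete) (fun i ↦ .of_forall (h01 i)) hcorr univ μ
      (by rw [hμ, integral_pmfOfWeights]) δ hδ.le
end

section
/- Random matrices have no dense rectangles: let τ and κ be positive real numbers with κ + τ < 1.5 and κ + 2τ < 2. Then there exists ε > 0 such that, as n → ∞, the proportion of subsets S ⊆ Fin (2^n) × Fin (2^n) of cardinality exactly ⌊(2 : ℝ)^(1.5·n)⌋ (among all subsets of that cardinality) for which there exist A, B ⊆ Fin (2^n) with |A| ≤ ⌊(2 : ℝ)^(τn)⌋, |B| ≤ ⌊(2 : ℝ)^(τn)⌋ and |S ∩ (A × B)| ≥ (2 : ℝ)^((1.5 − κ − ε)·n) tends to 0. -/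
open Finset Filter

open scoped Classical in
/-- The set of `2^n × 2^n` 0/1-matrices (identified with subsets of
`Fin (2^n) × Fin (2^n)`) with exactly `⌊2^(1.5 n)⌋` ones. -/
noncomputable def allMatrices (n : ℕ) : Finset (Finset (Fin (2 ^ n) × Fin (2 ^ n))) :=
  Finset.univ.powerset.filter fun S => S.card = ⌊(2 : ℝ) ^ (1.5 * (n : ℝ))⌋₊

open scoped Classical in
/-- `S` has a `⌊2^(τ n)⌋ × ⌊2^(τ n)⌋` combinatorial rectangle containing at least
`2^((1.5 - κ - ε) n)` of its ones. -/
def HasDenseRectangle (τ κ ε : ℝ) (n : ℕ) (S : Finset (Fin (2 ^ n) × Fin (2 ^ n))) : Prop :=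
  ∃ A B : Finset (Fin (2 ^ n)),
    A.card ≤ ⌊(2 : ℝ) ^ (τ * (n : ℝ))⌋₊ ∧ B.card ≤ ⌊(2 : ℝ) ^ (τ * (n : ℝ))⌋₊ ∧
    (2 : ℝ) ^ ((1.5 - κ - ε) * (n : ℝ)) ≤
      ((S.filter fun p => p.1 ∈ A ∧ p.2 ∈ B).card : ℝ)

/-!
A random `m`-subset of `U` contains a given `k`-set with probability at most `(m / |U|) ^ k`, so by
a union bound over the `k`-subsets of `R` it meets `R` in at least `k` points with probability at
most `(e |R| m / (k |U|)) ^ k`. When `|U| = 4 ^ n`, `m ≈ 2 ^ (1.5 n)`, `|R| ≤ 2 ^ (2 τ n)` and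
`k ≈ 2 ^ ((1.5 - κ - ε) n)`, the base tends to `0` because `κ + 2 τ < 2`. There are at most
`(2 ^ n + 1) ^ (2 a)` rectangles with sides at most `a ≈ 2 ^ (τ n)`, and `(1 / 2) ^ k` beats this
number because `κ + τ < 1.5` makes `k` exponentially larger than `n a`.
-/

section BinomialCoefficients

variable {m M : ℕ}

theorem descFactorial_le_div_pow_mul (h : m ≤ M) (k : ℕ) :
    (m.descFactorial k : ℝ) ≤ (m / M) ^ k * M.descFactorial k := by
  have factor_le (i : ℕ) : ((m - i : ℕ) : ℝ) ≤ m / M * (M - i : ℕ) := by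
    obtain hmi | him := le_total m i
    · rw [Nat.sub_eq_zero_of_le hmi, Nat.cast_zero]
      positivity
    · rcases M.eq_zero_or_pos with rfl | hM
      · simp [Nat.le_zero.1 h]
      · have hM' : (0 : ℝ) < M := by exact_mod_cast hM
        have hmM : (m : ℝ) ≤ M := by exact_mod_cast h
        rw [Nat.cast_sub him, Nat.cast_sub (him.trans h), div_mul_eq_mul_div, le_div_iff₀ hM']
        nlinarith [mul_le_mul_of_nonneg_left hmM (Nat.cast_nonneg (α := ℝ) i)]
  simp only [Nat.descFactorial_eq_prod_range, Nat.cast_prod]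
  calc ∏ i ∈ range k, ((m - i : ℕ) : ℝ)
      ≤ ∏ i ∈ range k, (m / M * (M - i : ℕ) : ℝ) :=
        prod_le_prod (fun i _ => Nat.cast_nonneg _) fun i _ => factor_le i
    _ = (m / M) ^ k * ∏ i ∈ range k, ((M - i : ℕ) : ℝ) := by
        rw [prod_mul_distrib, prod_const, card_range]

theorem choose_le_div_pow_mul_choose (h : m ≤ M) (k : ℕ) :
    (m.choose k : ℝ) ≤ (m / M) ^ k * M.choose k := by
  have hdesc := descFactorial_le_div_pow_mul h k
  simp only [Nat.descFactorial_eq_factorial_mul_choose, Nat.cast_mul] at hdesc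
  refine le_of_mul_le_mul_left ?_ (Nat.cast_pos.2 k.factorial_pos : (0 : ℝ) < k.factorial)
  linarith

theorem choose_sub_le_div_pow_mul_choose {k : ℕ} (hk : k ≤ m) (hm : m ≤ M) :
    ((M - k).choose (m - k) : ℝ) ≤ (m / M) ^ k * M.choose m := by
  have choose_pos : (0 : ℝ) < M.choose k := Nat.cast_pos.2 (Nat.choose_pos (hk.trans hm))
  refine le_of_mul_le_mul_left ?_ choose_pos
  calc (M.choose k : ℝ) * (M - k).choose (m - k) = M.choose m * m.choose k := by
        exact_mod_cast (Nat.choose_mul hk).symm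
    _ ≤ M.choose m * ((m / M) ^ k * M.choose k) := by
        gcongr
        exact choose_le_div_pow_mul_choose hm k
    _ = M.choose k * ((m / M) ^ k * M.choose m) := by ring

theorem choose_le_exp_one_mul_div_pow (r k : ℕ) :
    (r.choose k : ℝ) ≤ (Real.exp 1 * r / k) ^ k := by
  rcases k.eq_zero_or_pos with rfl | hk
  · simp
  have k_pow_pos : (0 : ℝ) < (k : ℝ) ^ k := by positivity
  rw [div_pow, le_div_iff₀ k_pow_pos]
  calc (r.choose k : ℝ) * (k : ℝ) ^ k
      ≤ (r : ℝ) ^ k / k.factorial * (k : ℝ) ^ k := by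
        gcongr
        exact Nat.choose_le_pow_div k r
    _ = (k : ℝ) ^ k / k.factorial * (r : ℝ) ^ k := by ring
    _ ≤ Real.exp k * (r : ℝ) ^ k := by
        gcongr
        exact Real.pow_div_factorial_le_exp _ k.cast_nonneg k
    _ = (Real.exp 1 * r) ^ k := by rw [mul_pow, Real.exp_one_pow]

end BinomialCoefficients

section RandomSubsets

variable {α : Type*} [DecidableEq α] {U : Finset α}

theorem card_powersetCard_filter_superset_le {T : Finset α} (hT : T ⊆ U) (m : ℕ) :
    (#{S ∈ powersetCard m U | T ⊆ S} : ℝ) ≤ (m / #U) ^ #T * (#U).choose m := by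
  obtain hmU | hUm := le_or_gt m #U
  · obtain hTm | hmT := le_or_gt #T m
    · rw [card_filter_powersetCard_subset T U m hT hTm]
      exact choose_sub_le_div_pow_mul_choose hTm hmU
    · have no_superset : {S ∈ powersetCard m U | T ⊆ S} = ∅ :=
        filter_eq_empty_iff.2 fun S hS hTS =>
          (card_le_card hTS).not_gt ((mem_powersetCard.1 hS).2.trans_lt hmT)
      rw [no_superset, card_empty, Nat.cast_zero]
      positivity
  · simp [powersetCard_eq_empty.2 hUm, Nat.choose_eq_zero_of_lt hUm]

theorem card_powersetCard_filter_le_card_inter_le {R : Finset α} (hR : R ⊆ U) (k m : ℕ) :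
    (#{S ∈ powersetCard m U | k ≤ #(S ∩ R)} : ℝ) ≤
      (Real.exp 1 * #R * m / (k * #U)) ^ k * (#U).choose m := by
  have subset_biUnion : {S ∈ powersetCard m U | k ≤ #(S ∩ R)} ⊆
      (powersetCard k R).biUnion fun T => {S ∈ powersetCard m U | T ⊆ S} := by
    intro S hS
    obtain ⟨hSU, hkS⟩ := mem_filter.1 hS
    obtain ⟨T, hT, hTk⟩ := exists_subset_card_eq hkS
    exact mem_biUnion.2 ⟨T, mem_powersetCard.2 ⟨hT.trans inter_subset_right, hTk⟩,
      mem_filter.2 ⟨hSU, hT.trans inter_subset_left⟩⟩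
  calc (#{S ∈ powersetCard m U | k ≤ #(S ∩ R)} : ℝ)
      ≤ ∑ T ∈ powersetCard k R, (#{S ∈ powersetCard m U | T ⊆ S} : ℝ) := by
        exact_mod_cast (card_le_card subset_biUnion).trans card_biUnion_le
    _ ≤ ∑ _T ∈ powersetCard k R, ((m : ℝ) / #U) ^ k * (#U).choose m := by
        refine sum_le_sum fun T hT => ?_
        obtain ⟨hTR, rfl⟩ := mem_powersetCard.1 hT
        exact card_powersetCard_filter_superset_le (hTR.trans hR) m
    _ = (#R).choose k * (((m : ℝ) / #U) ^ k * (#U).choose m) := by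
        rw [sum_const, card_powersetCard, nsmul_eq_mul]
    _ ≤ (Real.exp 1 * #R / k) ^ k * (((m : ℝ) / #U) ^ k * (#U).choose m) := by
        gcongr
        exact choose_le_exp_one_mul_div_pow _ k
    _ = (Real.exp 1 * #R * m / (k * #U)) ^ k * (#U).choose m := by
        rw [← mul_assoc, ← mul_pow, div_mul_div_comm]

end RandomSubsets

theorem card_filter_card_le_le_pow (α : Type*) [Fintype α] (a : ℕ) :
    #{A : Finset α | #A ≤ a} ≤ (Fintype.card α + 1) ^ a := by
  classical
  have subset_biUnion : ({A | #A ≤ a} : Finset (Finset α)) ⊆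
      (range (a + 1)).biUnion fun i => powersetCard i univ := by
    intro A hA
    simpa [Nat.lt_succ_iff] using hA
  calc #{A : Finset α | #A ≤ a}
      ≤ ∑ i ∈ range (a + 1), #(powersetCard i (univ : Finset α)) :=
        (card_le_card subset_biUnion).trans card_biUnion_le
    _ ≤ ∑ i ∈ range (a + 1), Fintype.card α ^ i * 1 ^ (a - i) * a.choose i := by
        refine sum_le_sum fun i hi => ?_
        rw [card_powersetCard, card_univ, one_pow, mul_one]
        have choose_pos : 0 < a.choose i := Nat.choose_pos (Nat.lt_succ_iff.1 (mem_range.1 hi))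
        exact (Nat.choose_le_pow _ i).trans (Nat.le_mul_of_pos_right _ choose_pos)
    _ = (Fintype.card α + 1) ^ a := (add_pow _ _ _).symm

section Rectangles

variable {α β : Type*} [DecidableEq α] [DecidableEq β]

/-- `S` has at least `k` elements in some combinatorial rectangle with sides of size at most `a`
and `b`. This is `HasDenseRectangle` for arbitrary index types and natural-number bounds. -/
def HasHeavyRectangle (a b k : ℕ) (S : Finset (α × β)) : Prop :=
  ∃ (A : Finset α) (B : Finset β), #A ≤ a ∧ #B ≤ b ∧ k ≤ #(S ∩ A ×ˢ B)

variable [Fintype α] [Fintype β]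

open scoped Classical in
theorem card_powersetCard_filter_hasHeavyRectangle_le (a b k m : ℕ) :
    (#{S ∈ powersetCard m (univ : Finset (α × β)) | HasHeavyRectangle a b k S} : ℝ) ≤
      (Fintype.card α + 1) ^ a * (Fintype.card β + 1) ^ b *
        ((Real.exp 1 * (a * b) * m / (k * (Fintype.card α * Fintype.card β))) ^ k *
          (Fintype.card α * Fintype.card β).choose m) := by
  set sides : Finset (Finset α × Finset β) :=
    ({A | #A ≤ a} : Finset (Finset α)) ×ˢ ({B | #B ≤ b} : Finset (Finset β)) with sides_def
  set bound : ℝ := (Real.exp 1 * (a * b) * m / (k * (Fintype.card α * Fintype.card β))) ^ k *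
    (Fintype.card α * Fintype.card β).choose m with bound_def
  have card_sides : (#sides : ℝ) ≤ (Fintype.card α + 1) ^ a * (Fintype.card β + 1) ^ b := by
    rw [sides_def, card_product]
    exact_mod_cast Nat.mul_le_mul (card_filter_card_le_le_pow α a) (card_filter_card_le_le_pow β b)
  have subset_biUnion : {S ∈ powersetCard m (univ : Finset (α × β)) | HasHeavyRectangle a b k S} ⊆
      sides.biUnion fun p => {S ∈ powersetCard m univ | k ≤ #(S ∩ p.1 ×ˢ p.2)} := by
    intro S hS
    obtain ⟨hSm, A, B, hA, hB, hk⟩ := mem_filter.1 hS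
    exact mem_biUnion.2 ⟨(A, B), by simp [sides_def, hA, hB], mem_filter.2 ⟨hSm, hk⟩⟩
  have card_le_bound : ∀ p ∈ sides,
      (#{S ∈ powersetCard m (univ : Finset (α × β)) | k ≤ #(S ∩ p.1 ×ˢ p.2)} : ℝ) ≤ bound := by
    rintro ⟨A, B⟩ hp
    obtain ⟨hA, hB⟩ : #A ≤ a ∧ #B ≤ b := by simpa [sides_def] using hp
    refine (card_powersetCard_filter_le_card_inter_le (subset_univ (A ×ˢ B)) k m).trans ?_
    rw [bound_def, card_product, card_univ, Fintype.card_prod, Nat.cast_mul, Nat.cast_mul]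
    gcongr
  calc (#{S ∈ powersetCard m (univ : Finset (α × β)) | HasHeavyRectangle a b k S} : ℝ)
      ≤ ∑ p ∈ sides,
          (#{S ∈ powersetCard m (univ : Finset (α × β)) | k ≤ #(S ∩ p.1 ×ˢ p.2)} : ℝ) := by
        exact_mod_cast (card_le_card subset_biUnion).trans card_biUnion_le
    _ ≤ #sides * bound := by
        rw [← nsmul_eq_mul]
        exact sum_le_card_nsmul _ _ _ card_le_bound
    _ ≤ (Fintype.card α + 1) ^ a * (Fintype.card β + 1) ^ b * bound := by gcongr

end Rectangles

theorem allMatrices_eq_powersetCard (n : ℕ) :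
    allMatrices n = powersetCard ⌊(2 : ℝ) ^ (1.5 * (n : ℝ))⌋₊ univ :=
  powersetCard_eq_filter.symm

theorem hasDenseRectangle_iff_hasHeavyRectangle (τ κ ε : ℝ) (n : ℕ)
    (S : Finset (Fin (2 ^ n) × Fin (2 ^ n))) :
    HasDenseRectangle τ κ ε n S ↔
      HasHeavyRectangle ⌊(2 : ℝ) ^ (τ * (n : ℝ))⌋₊ ⌊(2 : ℝ) ^ (τ * (n : ℝ))⌋₊
        ⌈(2 : ℝ) ^ ((1.5 - κ - ε) * (n : ℝ))⌉₊ S := by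
  have filter_eq_inter (A B : Finset (Fin (2 ^ n))) :
      S.filter (fun p => p.1 ∈ A ∧ p.2 ∈ B) = S ∩ A ×ˢ B := by
    ext p
    simp only [mem_filter, mem_inter, mem_product]
  simp only [HasDenseRectangle, HasHeavyRectangle, Nat.ceil_le, ← filter_eq_inter]

open scoped Classical in
theorem card_filter_hasDenseRectangle_div_card_le (τ κ ε : ℝ) (n : ℕ) :
    (#((allMatrices n).filter (HasDenseRectangle τ κ ε n)) : ℝ) / #(allMatrices n) ≤
      ((2 : ℝ) ^ n + 1) ^ (2 * ⌊(2 : ℝ) ^ (τ * (n : ℝ))⌋₊) *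
        (Real.exp 1 * ⌊(2 : ℝ) ^ (τ * (n : ℝ))⌋₊ ^ 2 * ⌊(2 : ℝ) ^ (1.5 * (n : ℝ))⌋₊ /
            (⌈(2 : ℝ) ^ ((1.5 - κ - ε) * (n : ℝ))⌉₊ * ((2 : ℝ) ^ n) ^ 2)) ^
          ⌈(2 : ℝ) ^ ((1.5 - κ - ε) * (n : ℝ))⌉₊ := by
  refine div_le_of_le_mul₀ (by positivity) (by positivity) ?_
  simp only [hasDenseRectangle_iff_hasHeavyRectangle, allMatrices_eq_powersetCard]
  refine (card_powersetCard_filter_hasHeavyRectangle_le _ _ _ _).trans_eq ?_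
  rw [card_powersetCard, card_univ, Fintype.card_prod, Fintype.card_fin, Nat.cast_pow,
    Nat.cast_ofNat, ← pow_add, ← two_mul, ← sq, ← sq, ← mul_assoc]

theorem two_pow_add_one_pow_mul_pow_le {n a k : ℕ} (h : 2 * (n + 1) * a + n ≤ k) {x : ℝ}
    (hx₀ : 0 ≤ x) (hx : x ≤ 1 / 2) : ((2 : ℝ) ^ n + 1) ^ (2 * a) * x ^ k ≤ (1 / 2) ^ n := by
  have two_pow_add_one_le : (2 : ℝ) ^ n + 1 ≤ 2 ^ (n + 1) := by
    have := one_le_pow₀ (one_le_two : (1 : ℝ) ≤ 2) (n := n)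
    rw [pow_succ]
    linarith
  have pow_le : x ^ k ≤ (1 / 2) ^ (2 * (n + 1) * a + n) :=
    (pow_le_pow_left₀ hx₀ hx k).trans (pow_le_pow_of_le_one (by norm_num) (by norm_num) h)
  calc ((2 : ℝ) ^ n + 1) ^ (2 * a) * x ^ k
      ≤ ((2 : ℝ) ^ (n + 1)) ^ (2 * a) * (1 / 2) ^ (2 * (n + 1) * a + n) := by gcongr
    _ = (2 * (1 / 2)) ^ (2 * (n + 1) * a) * (1 / 2) ^ n := by
        rw [← pow_mul, pow_add, ← mul_assoc, mul_pow]
        congr 3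
        ring
    _ = (1 / 2) ^ n := by norm_num

section Asymptotics

theorem eventually_linear_mul_two_rpow_le {s t : ℝ} (h : s < t) (b c : ℝ) :
    ∀ᶠ n : ℕ in atTop, (b * n + c) * (2 : ℝ) ^ (s * n) ≤ (2 : ℝ) ^ (t * n) := by
  have one_lt_base : 1 < (2 : ℝ) ^ (t - s) := Real.one_lt_rpow one_lt_two (sub_pos.2 h)
  have isLittleO_const : (fun _ : ℕ => c) =o[atTop] fun n => ((2 : ℝ) ^ (t - s)) ^ n :=
    Asymptotics.isLittleO_const_left.2 <| .inr <|
      tendsto_norm_atTop_atTop.comp (tendsto_pow_atTop_atTop_of_one_lt one_lt_base)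
  have isLittleO_linear :
      (fun n : ℕ => b * (n : ℝ) + c) =o[atTop] fun n => ((2 : ℝ) ^ (t - s)) ^ n :=
    ((isLittleO_coe_const_pow_of_one_lt one_lt_base).const_mul_left b).add isLittleO_const
  filter_upwards [isLittleO_linear.eventuallyLE] with n hn
  rw [Real.norm_of_nonneg (by positivity : 0 ≤ ((2 : ℝ) ^ (t - s)) ^ n)] at hn
  calc (b * n + c) * (2 : ℝ) ^ (s * n)
      ≤ ((2 : ℝ) ^ (t - s)) ^ n * (2 : ℝ) ^ (s * n) := by
        gcongr
        exact (Real.le_norm_self _).trans hn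
    _ = (2 : ℝ) ^ (t * n) := by
        rw [← Real.rpow_mul_natCast two_pos.le, ← Real.rpow_add two_pos]
        ring_nf

theorem eventually_two_mul_succ_mul_floor_add_le_ceil {τ γ : ℝ} (hτ : 0 ≤ τ) (h : τ < γ) :
    ∀ᶠ n : ℕ in atTop,
      2 * (n + 1) * ⌊(2 : ℝ) ^ (τ * (n : ℝ))⌋₊ + n ≤ ⌈(2 : ℝ) ^ (γ * (n : ℝ))⌉₊ := by
  filter_upwards [eventually_linear_mul_two_rpow_le h 3 2] with n hn
  have one_le : 1 ≤ (2 : ℝ) ^ (τ * n) := Real.one_le_rpow one_le_two (by positivity)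
  have floor_le : (⌊(2 : ℝ) ^ (τ * (n : ℝ))⌋₊ : ℝ) ≤ 2 ^ (τ * (n : ℝ)) :=
    Nat.floor_le (by positivity)
  rw [← Nat.cast_le (α := ℝ)]
  push_cast
  calc 2 * ((n : ℝ) + 1) * ⌊(2 : ℝ) ^ (τ * (n : ℝ))⌋₊ + n
      ≤ 2 * ((n : ℝ) + 1) * 2 ^ (τ * (n : ℝ)) + n * 2 ^ (τ * (n : ℝ)) := by
        gcongr
        exact le_mul_of_one_le_right n.cast_nonneg one_le
    _ = (3 * n + 2) * 2 ^ (τ * (n : ℝ)) := by ring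
    _ ≤ ⌈(2 : ℝ) ^ (γ * (n : ℝ))⌉₊ := hn.trans (Nat.le_ceil _)

theorem eventually_exp_one_mul_floor_sq_mul_floor_div_le {τ σ γ : ℝ} (h : 2 * τ + σ < γ + 2) :
    ∀ᶠ n : ℕ in atTop,
      Real.exp 1 * ⌊(2 : ℝ) ^ (τ * (n : ℝ))⌋₊ ^ 2 * ⌊(2 : ℝ) ^ (σ * (n : ℝ))⌋₊ /
        (⌈(2 : ℝ) ^ (γ * (n : ℝ))⌉₊ * ((2 : ℝ) ^ n) ^ 2) ≤ 1 / 2 := by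
  filter_upwards [eventually_linear_mul_two_rpow_le h 0 (2 * Real.exp 1)] with n hn
  have numerator_le :
      Real.exp 1 * ⌊(2 : ℝ) ^ (τ * (n : ℝ))⌋₊ ^ 2 * ⌊(2 : ℝ) ^ (σ * (n : ℝ))⌋₊ ≤
        Real.exp 1 * 2 ^ ((2 * τ + σ) * n) := by
    calc Real.exp 1 * ⌊(2 : ℝ) ^ (τ * (n : ℝ))⌋₊ ^ 2 * ⌊(2 : ℝ) ^ (σ * (n : ℝ))⌋₊
        ≤ Real.exp 1 * (2 ^ (τ * (n : ℝ))) ^ 2 * 2 ^ (σ * (n : ℝ)) := by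
          gcongr <;> exact Nat.floor_le (by positivity)
      _ = Real.exp 1 * 2 ^ ((2 * τ + σ) * n) := by
          rw [← Real.rpow_mul_natCast two_pos.le, mul_assoc, ← Real.rpow_add two_pos]
          push_cast
          ring_nf
  have le_denominator : (2 : ℝ) ^ ((γ + 2) * n) ≤
      ⌈(2 : ℝ) ^ (γ * (n : ℝ))⌉₊ * ((2 : ℝ) ^ n) ^ 2 := by
    calc (2 : ℝ) ^ ((γ + 2) * n) = 2 ^ (γ * n) * (2 ^ n) ^ 2 := by
          rw [add_mul, Real.rpow_add two_pos, Real.rpow_mul_natCast two_pos.le 2, Real.rpow_two,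
            pow_right_comm]
      _ ≤ ⌈(2 : ℝ) ^ (γ * (n : ℝ))⌉₊ * (2 ^ n) ^ 2 := by
          gcongr
          exact Nat.le_ceil _
  refine div_le_of_le_mul₀ (by positivity) (by norm_num) ?_
  linarith

end Asymptotics

open scoped Classical in
/-- Among all `2^n × 2^n` 0/1-matrices with exactly `⌊2^(1.5 n)⌋` ones, the proportion of
those having a `⌊2^(τ n)⌋ × ⌊2^(τ n)⌋` rectangle with at least `2^((1.5 - κ - ε) n)` ones
tends to `0` for some `ε > 0`, provided `κ + τ < 1.5` and `κ + 2τ < 2`. -/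
theorem stmt19 (τ κ : ℝ) (hτ : 0 < τ) (hκ : 0 < κ)
    (h1 : κ + τ < 1.5) (h2 : κ + 2 * τ < 2) :
    ∃ ε : ℝ, 0 < ε ∧
      Tendsto
        (fun n : ℕ =>
          (((allMatrices n).filter (HasDenseRectangle τ κ ε n)).card : ℝ) /
            ((allMatrices n).card : ℝ))
        atTop (nhds 0) := by
  obtain ⟨ε, hε, hε_lt⟩ := exists_between (lt_min (sub_pos.2 h1) (sub_pos.2 h2))
  obtain ⟨hε₁, hε₂⟩ := lt_min_iff.1 hε_lt
  refine ⟨ε, hε, squeeze_zero' (.of_forall fun n => by positivity) ?_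
    (tendsto_pow_atTop_nhds_zero_of_lt_one (by norm_num : (0 : ℝ) ≤ 1 / 2) (by norm_num))⟩
  filter_upwards [
    eventually_two_mul_succ_mul_floor_add_le_ceil hτ.le (by linarith : τ < 1.5 - κ - ε),
    eventually_exp_one_mul_floor_sq_mul_floor_div_le
      (by linarith : 2 * τ + 1.5 < (1.5 - κ - ε) + 2)] with n rectangles_le base_le
  exact (card_filter_hasDenseRectangle_div_card_le τ κ ε n).trans
    (two_pow_add_one_pow_mul_pow_le rectangles_le (by positivity) base_le)
end
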